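/- Suppose the standing assumptions on f, g, h, Ω, F hold together with Assumptions 1, 2, 3 and 4, and suppose F satisfies the Kurdyka–Łojasiewicz property at every point of dom(F). Let (x^k), (y^k), (c_k), (α_k) be generated by PGSA. Then ∑_{k=1}^{∞} ‖x^k − x^{k−1}‖₂ < +∞ and (x^k) converges to a point x⋆ ∈ dom(F) which is a critical point of F, i.e., F(x⋆)·∇g(x⋆) − ∇h(x⋆) ∈ ∂̂f(x⋆). -/

import Mathlib

open Filter Topology
open scoped RealInnerProductSpace

noncomputable section

/-- The Fréchet subdifferential of an extended-real-valued function `φ` at `x`: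
the set of `y` with `liminf_{z→x, z≠x} (φ z − φ x − ⟨y, z−x⟩)/‖z−x‖ ≥ 0`,
empty when `φ x = +∞`. -/
def fsub {n : ℕ} (φ : EuclideanSpace ℝ (Fin n) → EReal) (x : EuclideanSpace ℝ (Fin n)) :
    Set (EuclideanSpace ℝ (Fin n)) :=
  {y | φ x ≠ ⊤ ∧
    0 ≤ liminf (fun z => (φ z - φ x - ((⟪y, z - x⟫ : ℝ) : EReal)) / ((‖z - x‖ : ℝ) : EReal))
      (𝓝[≠] x)}

/-- The limiting (Mordukhovich) subdifferential. -/
def lsub {n : ℕ} (φ : EuclideanSpace ℝ (Fin n) → EReal) (x : EuclideanSpace ℝ (Fin n)) :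
    Set (EuclideanSpace ℝ (Fin n)) :=
  {y | ∃ u : ℕ → EuclideanSpace ℝ (Fin n), ∃ v : ℕ → EuclideanSpace ℝ (Fin n),
      Tendsto u atTop (𝓝 x) ∧ Tendsto (fun k => φ (u k)) atTop (𝓝 (φ x)) ∧
      (∀ k, v k ∈ fsub φ (u k)) ∧ Tendsto v atTop (𝓝 y)}

/-- The subdifferential of a convex real-valued function. -/
def csub {n : ℕ} (g : EuclideanSpace ℝ (Fin n) → ℝ) (x : EuclideanSpace ℝ (Fin n)) :
    Set (EuclideanSpace ℝ (Fin n)) :=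
  {y | ∀ z, g x + ⟪y, z - x⟫ ≤ g z}

/-- The (possibly set-valued) proximity operator of a proper lsc extended-real-valued
function `ψ` at `u`. -/
def proxSet {n : ℕ} (ψ : EuclideanSpace ℝ (Fin n) → EReal) (u : EuclideanSpace ℝ (Fin n)) :
    Set (EuclideanSpace ℝ (Fin n)) :=
  {y | ∀ z, ψ y + ((‖y - u‖ ^ 2 / 2 : ℝ) : EReal) ≤ ψ z + ((‖z - u‖ ^ 2 / 2 : ℝ) : EReal)}

/-- The fractional objective `F = (f+h)/g` on `Ω ∩ dom f`, `+∞` elsewhere. -/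
def Ffrac {n : ℕ} (f : EuclideanSpace ℝ (Fin n) → EReal) (g h : EuclideanSpace ℝ (Fin n) → ℝ) :
    EuclideanSpace ℝ (Fin n) → EReal :=
  fun x => if g x ≠ 0 ∧ f x ≠ ⊤ then ((((f x).toReal + h x) / g x : ℝ) : EReal) else ⊤

/-- The Kurdyka–Łojasiewicz property of  at . -/
def KLProperty {n : ℕ} (Φ : EuclideanSpace ℝ (Fin n) → EReal)
    (xh : EuclideanSpace ℝ (Fin n)) : Prop :=
  ∃ η : ℝ, 0 < η ∧ ∃ O ∈ 𝓝 xh, ∃ φ φ' : ℝ → ℝ,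
    φ 0 = 0 ∧ (∀ s ∈ Set.Ico (0 : ℝ) η, 0 ≤ φ s) ∧
    ContinuousOn φ (Set.Ico 0 η) ∧ ConcaveOn ℝ (Set.Ico 0 η) φ ∧
    (∀ s ∈ Set.Ioo (0 : ℝ) η, HasDerivAt φ (φ' s) s ∧ 0 < φ' s) ∧
    ∀ x ∈ O, Φ xh < Φ x → Φ x < Φ xh + ((η : ℝ) : EReal) →
      1 ≤ ENNReal.ofReal (φ' ((Φ x).toReal - (Φ xh).toReal)) *
        EMetric.infEdist 0 (lsub Φ x)

/-!
A PGSA step makes `F(xᵏ)∇g(xᵏ) - ∇h(xᵏ) - (xᵏ⁺¹ - xᵏ)/αₖ` a proximal subgradient of `f` at `xᵏ⁺¹`: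
a global minorant with an error at most `‖z - xᵏ⁺¹‖² / (2αₖ)`. Testing it at `xᵏ`, together with the
convexity inequality for `g` and the descent lemma for `h`, gives the decrease
`(1/(2αₖ) - L/2) ‖xᵏ⁺¹ - xᵏ‖² ≤ g(xᵏ⁺¹) (F(xᵏ) - F(xᵏ⁺¹))`. The iterates therefore stay in a
sublevel set of `F`, which is closed because numerator and denominator have no common zero, hence
compact.

By the quotient rule the same vector yields a subgradient of `F` at `xᵏ⁺¹`, of norm
`O(‖xᵏ⁺¹ - xᵏ‖)` near a cluster point since `F∇g - ∇h` is locally Lipschitz. With the KL inequality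
this makes `‖xᵏ⁺¹ - xᵏ‖ + C φ(F(xᵏ⁺¹) - F(x⋆))` drop by at least the length of the next step as long
as the iterates are near `x⋆`; being small at some iterate close to `x⋆`, this potential traps the
sequence there and bounds its length. The moduli `1/(2αₖ)` are uniformly bounded, so the proximal
subgradient inequality passes to the limit, which is the criticality of `x⋆`.
-/

lemma locallyLipschitzOn_of_forall_ball {X Y : Type*} [PseudoMetricSpace X]
    [PseudoEMetricSpace Y] {s : Set X} {u : X → Y}
    (hu : ∀ z ∈ s, ∃ K : NNReal, ∃ δ > 0, LipschitzOnWith K u (Metric.ball z δ ∩ s)) :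
    LocallyLipschitzOn s u := by
  intro z hz
  obtain ⟨K, δ, hδ, hK⟩ := hu z hz
  exact ⟨K, _, inter_mem (mem_nhdsWithin_of_mem_nhds (Metric.ball_mem_nhds z hδ))
    self_mem_nhdsWithin, hK⟩

lemma locallyLipschitzOn_of_forall_norm_sub_lt {V W : Type*} [SeminormedAddCommGroup V]
    [SeminormedAddCommGroup W] {s : Set V} {u : V → W}
    (hu : ∀ z ∈ s, ∃ K : ℝ, ∃ δ > 0, ∀ p, ‖p - z‖ < δ → p ∈ s → ∀ q, ‖q - z‖ < δ → q ∈ s →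
      ‖u p - u q‖ ≤ K * ‖p - q‖) : LocallyLipschitzOn s u := by
  refine locallyLipschitzOn_of_forall_ball fun z hz => ?_
  obtain ⟨K, δ, hδ, hK⟩ := hu z hz
  refine ⟨K.toNNReal, δ, hδ, LipschitzOnWith.of_dist_le_mul fun p hp q hq => ?_⟩
  rw [dist_eq_norm, dist_eq_norm]
  exact (hK p (mem_ball_iff_norm.1 hp.1) hp.2 q (mem_ball_iff_norm.1 hq.1) hq.2).trans
    (by gcongr; exact Real.le_coe_toNNReal K)

section LocallyLipschitzOn

variable {X : Type*} [PseudoEMetricSpace X] {s : Set X}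

lemma locallyLipschitzOn_prodMk {Y Z : Type*} [PseudoEMetricSpace Y] [PseudoEMetricSpace Z]
    {u : X → Y} {v : X → Z} (hu : LocallyLipschitzOn s u) (hv : LocallyLipschitzOn s v) :
    LocallyLipschitzOn s fun z => (u z, v z) :=
  locallyLipschitzOn_iff_restrict.2 (hu.restrict.prodMk hv.restrict)

variable {V W : Type*} [NormedAddCommGroup V] [NormedSpace ℝ V]
  [NormedAddCommGroup W] [NormedSpace ℝ W]

lemma locallyLipschitzOn_comp_of_contDiffAt {u : X → V} {ψ : V → W} (hu : LocallyLipschitzOn s u)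
    (hψ : ∀ z ∈ s, ContDiffAt ℝ 1 ψ (u z)) : LocallyLipschitzOn s (ψ ∘ u) := by
  intro z hz
  obtain ⟨K, t, ht, hut⟩ := hu hz
  obtain ⟨K', t', ht', hψt'⟩ := (hψ z hz).exists_lipschitzOnWith
  exact ⟨K' * K, t ∩ u ⁻¹' t', inter_mem ht (hu.continuousOn z hz ht'),
    hψt'.comp (hut.mono Set.inter_subset_left) fun _ hw => hw.2⟩

lemma locallyLipschitzOn_smul {c : X → ℝ} {v : X → V} (hc : LocallyLipschitzOn s c)
    (hv : LocallyLipschitzOn s v) : LocallyLipschitzOn s fun z => c z • v z :=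
  locallyLipschitzOn_comp_of_contDiffAt (locallyLipschitzOn_prodMk hc hv)
    fun _ _ => contDiff_smul.contDiffAt

lemma locallyLipschitzOn_div {N g : X → ℝ} (hN : LocallyLipschitzOn s N)
    (hg : LocallyLipschitzOn s g) (hg0 : ∀ z ∈ s, g z ≠ 0) :
    LocallyLipschitzOn s fun z => N z / g z :=
  locallyLipschitzOn_comp_of_contDiffAt (ψ := fun p : ℝ × ℝ => p.1 / p.2)
    (locallyLipschitzOn_prodMk hN hg) fun z hz => contDiffAt_fst.div contDiffAt_snd (hg0 z hz)

end LocallyLipschitzOn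

section Gradient

variable {E : Type*} [NormedAddCommGroup E] [InnerProductSpace ℝ E] [CompleteSpace E]

lemma locallyLipschitzOn_of_hasGradientAt {φ : E → ℝ} {φ' : E → E} {s : Set E} (hs : IsOpen s)
    (hφ : ∀ z ∈ s, HasGradientAt φ (φ' z) z) (hφ' : ContinuousOn φ' s) :
    LocallyLipschitzOn s φ := by
  intro z hz
  have hstrict : HasStrictFDerivAt φ (InnerProductSpace.toDual ℝ E (φ' z)) z :=
    hasStrictFDerivAt_of_hasFDerivAt_of_continuousAt
      (eventually_of_mem (hs.mem_nhds hz) fun w hw => (hφ w hw).hasFDerivAt)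
      ((InnerProductSpace.toDual ℝ E).continuous.continuousAt.comp (hφ'.continuousAt
        (hs.mem_nhds hz)))
  obtain ⟨K, t, ht, hφt⟩ := hstrict.exists_lipschitzOnWith
  exact ⟨K, t, mem_nhdsWithin_of_mem_nhds ht, hφt⟩

lemma le_add_inner_add_sq_of_lipschitzWith_gradient {h : E → ℝ} {h' : E → E} {L : NNReal}
    (hh : ∀ z, HasGradientAt h (h' z) z) (hL : LipschitzWith L h') (x z : E) :
    h z ≤ h x + ⟪h' x, z - x⟫ + L / 2 * ‖z - x‖ ^ 2 := by
  set d := z - x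
  have hline (t : ℝ) : HasDerivAt (fun t : ℝ => h (x + t • d)) ⟪h' (x + t • d), d⟫ t := by
    have hd : HasDerivAt (fun t : ℝ => x + t • d) d t := by
      simpa using ((hasDerivAt_id t).smul_const d).const_add x
    simpa using! (hh (x + t • d)).hasFDerivAt.comp_hasDerivAt t hd
  have hquad (t : ℝ) : HasDerivAt (fun t : ℝ => h x + t * ⟪h' x, d⟫ + L / 2 * ‖d‖ ^ 2 * t ^ 2)
      (⟪h' x, d⟫ + L * t * ‖d‖ ^ 2) t := by
    convert! (((hasDerivAt_id t).mul_const ⟪h' x, d⟫).const_add (h x)).add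
      ((hasDerivAt_pow 2 t).const_mul (L / 2 * ‖d‖ ^ 2)) using 1
    push_cast; ring
  have hslope (t : ℝ) (ht : t ∈ Set.Ico (0 : ℝ) 1) :
      ⟪h' (x + t • d), d⟫ ≤ ⟪h' x, d⟫ + L * t * ‖d‖ ^ 2 := by
    rw [← sub_le_iff_le_add', ← inner_sub_left]
    calc ⟪h' (x + t • d) - h' x, d⟫ ≤ ‖h' (x + t • d) - h' x‖ * ‖d‖ := real_inner_le_norm _ _
      _ ≤ (L * ‖t • d‖) * ‖d‖ := by
        gcongr
        simpa using hL.norm_sub_le (x + t • d) x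
      _ = L * t * ‖d‖ ^ 2 := by
        rw [norm_smul, Real.norm_of_nonneg ht.1]
        ring
  have hle := image_le_of_deriv_right_le_deriv_boundary
    (fun t _ => (hline t).continuousAt.continuousWithinAt)
    (fun t _ => (hline t).hasDerivWithinAt) (by simp)
    (fun t _ => (hquad t).continuousAt.continuousWithinAt)
    (fun t _ => (hquad t).hasDerivWithinAt) hslope (Set.right_mem_Icc.2 zero_le_one)
  simpa [d] using hle

end Gradient

section RegularSubgradient

variable {E : Type*} [NormedAddCommGroup E] [InnerProductSpace ℝ E]

/-- `v` is a regular (Fréchet) subgradient at `x` of the restriction of `φ` to `s`, in `ε`-form. It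
lets the calculus of `fsub` be done with real-valued functions on effective domains. -/
def IsRegularSubgradientWithinAt (φ : E → ℝ) (s : Set E) (x v : E) : Prop :=
  ∀ ε > (0 : ℝ), ∀ᶠ z in 𝓝[s] x, φ x + ⟪v, z - x⟫ - ε * ‖z - x‖ ≤ φ z

variable {φ ψ : E → ℝ} {s t : Set E} {x v w : E}

namespace IsRegularSubgradientWithinAt

lemma mono (hφ : IsRegularSubgradientWithinAt φ s x v) (hts : t ⊆ s) :
    IsRegularSubgradientWithinAt φ t x v :=
  fun ε hε => (hφ ε hε).filter_mono (nhdsWithin_mono x hts)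

lemma congr_of_eqOn (hφ : IsRegularSubgradientWithinAt φ s x v) (hφψ : Set.EqOn φ ψ s)
    (hx : x ∈ s) : IsRegularSubgradientWithinAt ψ s x v := by
  intro ε hε
  filter_upwards [hφ ε hε, self_mem_nhdsWithin] with z hz hzs
  rwa [← hφψ hx, ← hφψ hzs]

lemma of_hasGradientAt [CompleteSpace E] (hφ : HasGradientAt φ v x) :
    IsRegularSubgradientWithinAt φ s x v := by
  intro ε hε
  filter_upwards [nhdsWithin_le_nhds ((hasGradientAt_iff_isLittleO.1 hφ).bound hε)] with z hz
  linarith [(abs_le.1 hz).1]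

lemma add (hφ : IsRegularSubgradientWithinAt φ s x v)
    (hψ : IsRegularSubgradientWithinAt ψ s x w) :
    IsRegularSubgradientWithinAt (fun z => φ z + ψ z) s x (v + w) := by
  intro ε hε
  filter_upwards [hφ (ε / 2) (half_pos hε), hψ (ε / 2) (half_pos hε)] with z hφz hψz
  rw [inner_add_left]
  linarith

lemma div_of_eq_zero {g : E → ℝ} (hφ : IsRegularSubgradientWithinAt φ s x v) (hφx : φ x = 0)
    (hg : ContinuousAt g x) (hgx : 0 < g x) :
    IsRegularSubgradientWithinAt (fun z => φ z / g z) s x ((g x)⁻¹ • v) := by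
  intro ε hε
  have herror : Tendsto (fun z => ε * g x / 2 * (g z)⁻¹ + |(g z)⁻¹ - (g x)⁻¹| * ‖v‖) (𝓝 x)
      (𝓝 (ε / 2)) := by
    have hinv : Tendsto (fun z => (g z)⁻¹) (𝓝 x) (𝓝 (g x)⁻¹) := hg.inv₀ hgx.ne'
    convert (hinv.const_mul (ε * g x / 2)).add ((hinv.sub_const (g x)⁻¹).abs.mul_const ‖v‖)
      using 2
    rw [sub_self, abs_zero, zero_mul, add_zero]
    field_simp
  filter_upwards [hφ (ε * g x / 2) (by positivity), nhdsWithin_le_nhds (hg.eventually_const_lt hgx),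
    nhdsWithin_le_nhds (herror.eventually_lt_const (half_lt_self hε))] with z hz hgz hεz
  have hdrift : -(|(g z)⁻¹ - (g x)⁻¹| * (‖v‖ * ‖z - x‖)) ≤ ((g z)⁻¹ - (g x)⁻¹) * ⟪v, z - x⟫ := by
    refine (abs_le.1 ?_).1
    rw [abs_mul]
    gcongr
    exact abs_real_inner_le_norm v (z - x)
  rw [hφx, zero_add] at hz
  have hscaled := mul_le_mul_of_nonneg_right hz (inv_nonneg.2 hgz.le)
  rw [hφx, zero_div, zero_add, inner_smul_left, conj_trivial, div_eq_mul_inv]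
  linarith [mul_le_mul_of_nonneg_right hεz.le (norm_nonneg (z - x))]

lemma div [CompleteSpace E] {g : E → ℝ} {gx : E} (hφ : IsRegularSubgradientWithinAt φ s x v)
    (hg : HasGradientAt g gx x) (hgx : 0 < g x) :
    IsRegularSubgradientWithinAt (fun z => φ z / g z) s x
      ((g x)⁻¹ • (v - (φ x / g x) • gx)) := by
  -- Subtracting the constant `φ x / g x` reduces to a numerator vanishing at `x`.
  have hcg : HasGradientAt (fun z => -(φ x / g x) * g z) (-(φ x / g x) • gx) x := by
    simpa [hasGradientAt_iff_hasFDerivAt] using! hg.hasFDerivAt.const_mul (-(φ x / g x))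
  have hnum := (hφ.add (of_hasGradientAt hcg)).div_of_eq_zero (by field_simp; ring)
    hg.continuousAt hgx
  intro ε hε
  filter_upwards [hnum ε hε, nhdsWithin_le_nhds (hg.continuousAt.eventually_const_lt hgx)]
    with z hz hgz
  rw [neg_smul, ← sub_eq_add_neg] at hz
  have hsplit (r : ℝ) (hr : r ≠ 0) (p : ℝ) :
      (p + -(φ x / g x) * r) / r = p / r - φ x / g x := by
    field_simp
    ring
  rw [hsplit _ hgz.ne', hsplit _ hgx.ne'] at hz
  linarith

end IsRegularSubgradientWithinAt

end RegularSubgradient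

section Subdifferential

variable {n : ℕ} {Φ : EuclideanSpace ℝ (Fin n) → EReal} {x v w : EuclideanSpace ℝ (Fin n)}

lemma mem_fsub_iff (hbot : ∀ z, Φ z ≠ ⊥) :
    v ∈ fsub Φ x ↔
      Φ x ≠ ⊤ ∧ IsRegularSubgradientWithinAt (fun z => (Φ z).toReal) {z | Φ z ≠ ⊤} x v := by
  refine and_congr_right fun hx => ?_
  have hquot {z : EuclideanSpace ℝ (Fin n)} (hzx : z ≠ x) (hz : Φ z ≠ ⊤) (r : ℝ) :
      ((-r : ℝ) : EReal) ≤ (Φ z - Φ x - ((⟪v, z - x⟫ : ℝ) : EReal)) / ((‖z - x‖ : ℝ) : EReal) ↔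
        (Φ x).toReal + ⟪v, z - x⟫ - r * ‖z - x‖ ≤ (Φ z).toReal := by
    rw [← EReal.coe_toReal hx (hbot x), ← EReal.coe_toReal hz (hbot z)]
    rw [← EReal.coe_sub, ← EReal.coe_sub, ← EReal.coe_div, EReal.coe_le_coe_iff,
      le_div_iff₀ (norm_pos_iff.2 (sub_ne_zero.2 hzx)), EReal.toReal_coe, EReal.toReal_coe]
    constructor <;> intro h <;> linarith
  constructor
  · intro hlim ε hε
    have hev := eventually_lt_of_lt_liminf
      (lt_of_lt_of_le (EReal.coe_lt_coe_iff.2 (neg_lt_zero.2 hε)) hlim)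
    filter_upwards [nhdsWithin_le_nhds (eventually_nhdsWithin_iff.1 hev), self_mem_nhdsWithin]
      with z hz hzt
    rcases eq_or_ne z x with rfl | hzx
    · simp
    · exact (hquot hzx hzt ε).1 (hz hzx).le
  · intro hsub
    refine (le_liminf_iff').2 fun b hb => ?_
    obtain ⟨r, hbr, hr⟩ := EReal.lt_iff_exists_real_btwn.1 hb
    have hsub_r := eventually_nhdsWithin_iff.1 (hsub (-r) (by simpa using hr))
    filter_upwards [nhdsWithin_le_nhds hsub_r, self_mem_nhdsWithin] with z hz hzx
    refine hbr.le.trans ?_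
    by_cases hzt : Φ z = ⊤
    · have hpos : 0 < ‖z - x‖ := norm_pos_iff.2 (sub_ne_zero.2 hzx)
      rw [hzt, ← EReal.coe_toReal hx (hbot x), EReal.top_sub_coe, EReal.top_sub_coe,
        EReal.top_div_of_pos_ne_top (by exact_mod_cast hpos) (EReal.coe_ne_top _)]
      exact le_top
    · simpa using (hquot hzx hzt (-r)).2 (hz hzt)

lemma fsub_subset_lsub (Φ : EuclideanSpace ℝ (Fin n) → EReal) (x : EuclideanSpace ℝ (Fin n)) :
    fsub Φ x ⊆ lsub Φ x :=
  fun v hv => ⟨fun _ => x, fun _ => v, tendsto_const_nhds, tendsto_const_nhds, fun _ => hv,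
    tendsto_const_nhds⟩

lemma eq_of_mem_csub_of_hasGradientAt {g : EuclideanSpace ℝ (Fin n) → ℝ} (hv : v ∈ csub g x)
    (hw : HasGradientAt g w x) : v = w := by
  have hmin : IsLocalMin (fun z => g z - ⟪v, z⟫) x := by
    refine Eventually.of_forall fun z => ?_
    have := hv z
    rw [inner_sub_right] at this
    linarith
  have hderiv : HasFDerivAt (fun z => g z - ⟪v, z⟫)
      (InnerProductSpace.toDual ℝ _ (w - v)) x := by
    simpa using! hw.hasFDerivAt.sub (innerSL ℝ v).hasFDerivAt
  have hzero : w - v = 0 :=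
    (LinearIsometryEquiv.map_eq_zero_iff _).1 (hmin.hasFDerivAt_eq_zero hderiv)
  exact (sub_eq_zero.1 hzero).symm

end Subdifferential

section ProxSubgradient

variable {n : ℕ} {f : EuclideanSpace ℝ (Fin n) → EReal} {x w : EuclideanSpace ℝ (Fin n)} {A : ℝ}

/-- `w` is a global proximal subgradient of `f` at `x` with modulus `A`. Proximal points produce
such subgradients, and unlike Fréchet subgradients these are stable under limits. -/
def IsProxSubgradient (f : EuclideanSpace ℝ (Fin n) → EReal) (A : ℝ)
    (x w : EuclideanSpace ℝ (Fin n)) : Prop :=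
  f x ≠ ⊤ ∧ ∀ z, f z ≠ ⊤ → (f x).toReal + ⟪w, z - x⟫ ≤ (f z).toReal + A * ‖z - x‖ ^ 2

namespace IsProxSubgradient

lemma mono {B : ℝ} (hw : IsProxSubgradient f A x w) (hAB : A ≤ B) : IsProxSubgradient f B x w :=
  ⟨hw.1, fun z hz => (hw.2 z hz).trans (by gcongr)⟩

lemma mem_fsub (hw : IsProxSubgradient f A x w) (hbot : ∀ z, f z ≠ ⊥) : w ∈ fsub f x := by
  refine (mem_fsub_iff hbot).2 ⟨hw.1, fun ε hε => ?_⟩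
  have hsmall : ∀ᶠ z in 𝓝 x, A * ‖z - x‖ < ε := by
    have : Tendsto (fun z => A * ‖z - x‖) (𝓝 x) (𝓝 (A * ‖x - x‖)) :=
      Continuous.tendsto (by fun_prop) x
    exact this.eventually_lt_const (by simpa using hε)
  filter_upwards [nhdsWithin_le_nhds hsmall, self_mem_nhdsWithin] with z hz hzt
  linarith [hw.2 z hzt, mul_le_mul_of_nonneg_right hz.le (norm_nonneg (z - x))]

lemma of_tendsto {ι : Type*} {l : Filter ι} [l.NeBot] {u p : ι → EuclideanSpace ℝ (Fin n)}
    (hp : ∀ i, IsProxSubgradient f A (u i) (p i)) (hu : Tendsto u l (𝓝 x))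
    (hfu : Tendsto (fun i => (f (u i)).toReal) l (𝓝 (f x).toReal)) (hpw : Tendsto p l (𝓝 w))
    (hx : f x ≠ ⊤) : IsProxSubgradient f A x w := by
  refine ⟨hx, fun z hz => ?_⟩
  have hzu : Tendsto (fun i => z - u i) l (𝓝 (z - x)) := hu.const_sub z
  exact le_of_tendsto_of_tendsto' (hfu.add (hpw.inner hzu))
    (((hzu.norm.pow 2).const_mul A).const_add _) fun i => (hp i).2 z hz

lemma of_mem_proxSet {a : ℝ} (ha : 0 < a) (hbot : ∀ z, f z ≠ ⊥) (hproper : ∃ z, f z ≠ ⊤)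
    {u : EuclideanSpace ℝ (Fin n)} (hx : x ∈ proxSet (fun z => (a : EReal) * f z) u) :
    IsProxSubgradient f (1 / (2 * a)) x (a⁻¹ • (u - x)) := by
  have hxt : f x ≠ ⊤ := by
    intro htop
    obtain ⟨z, hz⟩ := hproper
    have hle : (a : EReal) * f x + _ ≤ (a : EReal) * f z + _ := hx z
    rw [htop, ← EReal.coe_toReal hz (hbot z), EReal.mul_top_of_pos (by exact_mod_cast ha),
      EReal.top_add_coe, top_le_iff] at hle
    exact EReal.coe_ne_top _ (by exact_mod_cast hle)
  refine ⟨hxt, fun z hz => ?_⟩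
  have hle : (a : EReal) * f x + _ ≤ (a : EReal) * f z + _ := hx z
  rw [← EReal.coe_toReal hz (hbot z), ← EReal.coe_toReal hxt (hbot x)] at hle
  norm_cast at hle
  have hexpand : ‖z - u‖ ^ 2 = ‖x - u‖ ^ 2 + 2 * ⟪x - u, z - x⟫ + ‖z - x‖ ^ 2 := by
    rw [← norm_add_sq_real, show x - u + (z - x) = z - u by abel]
  have hneg : ⟪u - x, z - x⟫ = -⟪x - u, z - x⟫ := by rw [← inner_neg_left, neg_sub]
  rw [inner_smul_left, conj_trivial, hneg]
  have hscaled := mul_le_mul_of_nonneg_left hle (inv_nonneg.2 ha.le)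
  rw [hexpand] at hscaled
  field_simp at hscaled ⊢
  linarith

end IsProxSubgradient

end ProxSubgradient

section FractionalObjective

variable {n : ℕ} {f : EuclideanSpace ℝ (Fin n) → EReal} {g h : EuclideanSpace ℝ (Fin n) → ℝ}
  {x : EuclideanSpace ℝ (Fin n)}

/-- The real quotient `(f + h) / g`, which represents `Ffrac f g h` on `fracDom f g`; elsewhere it
is a junk value. -/
def fracValue (f : EuclideanSpace ℝ (Fin n) → EReal) (g h : EuclideanSpace ℝ (Fin n) → ℝ)
    (x : EuclideanSpace ℝ (Fin n)) : ℝ :=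
  ((f x).toReal + h x) / g x

/-- The effective domain `Ω ∩ dom f` of `Ffrac f g h`. -/
def fracDom (f : EuclideanSpace ℝ (Fin n) → EReal) (g : EuclideanSpace ℝ (Fin n) → ℝ) :
    Set (EuclideanSpace ℝ (Fin n)) :=
  {x | g x ≠ 0 ∧ f x ≠ ⊤}

/-- The sign conditions on the data of the fractional program `min (f + h) / g`: the numerator
is nonnegative, the denominator is positive on `fracDom f g`, and they have no common zero. -/
structure IsFractionalProgram (f : EuclideanSpace ℝ (Fin n) → EReal)
    (g h : EuclideanSpace ℝ (Fin n) → ℝ) : Prop where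
  ne_bot (z : EuclideanSpace ℝ (Fin n)) : f z ≠ ⊥
  numerator_nonneg (z : EuclideanSpace ℝ (Fin n)) : 0 ≤ f z + ((h z : ℝ) : EReal)
  denominator_pos (z : EuclideanSpace ℝ (Fin n)) : z ∈ fracDom f g → 0 < g z
  numerator_ne_zero (z : EuclideanSpace ℝ (Fin n)) : g z = 0 → f z + ((h z : ℝ) : EReal) ≠ 0

lemma fracValue_mul_denominator (hx : g x ≠ 0) : fracValue f g h x * g x = (f x).toReal + h x :=
  div_mul_cancel₀ _ hx

lemma Ffrac_of_mem (hx : x ∈ fracDom f g) : Ffrac f g h x = (fracValue f g h x : ℝ) :=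
  if_pos hx

lemma Ffrac_ne_top_iff : Ffrac f g h x ≠ ⊤ ↔ x ∈ fracDom f g := by
  by_cases hx : x ∈ fracDom f g
  · simp [Ffrac_of_mem hx, hx]
  · simp [show Ffrac f g h x = ⊤ from if_neg hx, hx]

lemma Ffrac_ne_bot (f : EuclideanSpace ℝ (Fin n) → EReal) (g h : EuclideanSpace ℝ (Fin n) → ℝ)
    (x : EuclideanSpace ℝ (Fin n)) : Ffrac f g h x ≠ ⊥ := by
  unfold Ffrac
  split_ifs <;> simp

lemma inv_smul_mem_fsub_Ffrac (hbot : ∀ z, f z ≠ ⊥) {w gx hx : EuclideanSpace ℝ (Fin n)}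
    (hg : HasGradientAt g gx x) (hh : HasGradientAt h hx x) (hgx : 0 < g x) (hw : w ∈ fsub f x) :
    (g x)⁻¹ • (w + hx - fracValue f g h x • gx) ∈ fsub (Ffrac f g h) x := by
  obtain ⟨hxt, hwx⟩ := (mem_fsub_iff hbot).1 hw
  have hxdom : x ∈ fracDom f g := ⟨hgx.ne', hxt⟩
  refine (mem_fsub_iff (Ffrac_ne_bot f g h)).2 ⟨Ffrac_ne_top_iff.2 hxdom, ?_⟩
  have hquot := ((hwx.add (.of_hasGradientAt hh)).div hg hgx).mono
    fun z (hz : Ffrac f g h z ≠ ⊤) => (Ffrac_ne_top_iff.1 hz).2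
  refine hquot.congr_of_eqOn (fun z hz => ?_) (Ffrac_ne_top_iff.2 hxdom)
  rw [Ffrac_of_mem (Ffrac_ne_top_iff.1 hz), EReal.toReal_coe, fracValue]

namespace IsFractionalProgram

lemma fracValue_nonneg (hF : IsFractionalProgram f g h) (hx : x ∈ fracDom f g) :
    0 ≤ fracValue f g h x := by
  have hnum := hF.numerator_nonneg x
  rw [← EReal.coe_toReal hx.2 (hF.ne_bot x)] at hnum
  exact div_nonneg (by exact_mod_cast hnum) (hF.denominator_pos x hx).le

lemma Ffrac_le_coe_iff (hF : IsFractionalProgram f g h) {t : ℝ} :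
    Ffrac f g h x ≤ (t : EReal) ↔ f x ≤ ((t * g x - h x : ℝ) : EReal) := by
  have hdom (hx : x ∈ fracDom f g) :
      Ffrac f g h x ≤ (t : EReal) ↔ f x ≤ ((t * g x - h x : ℝ) : EReal) := by
    rw [Ffrac_of_mem hx, ← EReal.coe_toReal hx.2 (hF.ne_bot x), EReal.coe_le_coe_iff,
      EReal.coe_le_coe_iff, fracValue, div_le_iff₀ (hF.denominator_pos x hx), le_sub_iff_add_le]
  refine ⟨fun hle => (hdom (Ffrac_ne_top_iff.1 (hle.trans_lt (EReal.coe_lt_top t)).ne)).1 hle,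
    fun hle => (hdom ⟨fun hgx => hF.numerator_ne_zero x hgx ?_,
      (hle.trans_lt (EReal.coe_lt_top _)).ne⟩).2 hle⟩
  refine le_antisymm ?_ (hF.numerator_nonneg x)
  calc f x + (h x : EReal) ≤ ((t * g x - h x : ℝ) : EReal) + (h x : EReal) := by gcongr
    _ = 0 := by
      rw [hgx]
      norm_cast
      simp

lemma isClosed_Ffrac_le (hF : IsFractionalProgram f g h) (hf : LowerSemicontinuous f)
    (hg : Continuous g) (hh : Continuous h) (t : ℝ) :
    IsClosed {z | Ffrac f g h z ≤ (t : EReal)} := by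
  simp_rw [hF.Ffrac_le_coe_iff]
  exact hf.isClosed_epigraph.preimage
    (continuous_id.prodMk (continuous_coe_real_ereal.comp (by fun_prop)))

end IsFractionalProgram

end FractionalObjective

section Trapping

variable {X : Type*} [PseudoMetricSpace X] {x : ℕ → X} {P : ℕ → ℝ} {a : X}

lemma sum_dist_add_le_of_mem_ball {r : ℝ} (hP : ∀ k, dist (x k) (x (k + 1)) ≤ P k)
    (hstep : ∀ k, x k ∈ Metric.ball a r → x (k + 1) ∈ Metric.ball a r →
      dist (x (k + 1)) (x (k + 2)) + P (k + 1) ≤ P k)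
    (hstart : dist (x 0) a + 2 * P 0 < r) (m : ℕ) :
    ∑ j ∈ Finset.range m, dist (x (j + 1)) (x (j + 2)) + P m ≤ P 0 := by
  induction m with
  | zero => simp
  | succ m ih =>
    have hlength : ∑ j ∈ Finset.range (m + 1), dist (x j) (x (j + 1)) ≤ 2 * P 0 := by
      rw [Finset.sum_range_succ']
      linarith [hP 0, dist_nonneg.trans (hP m)]
    have htrapped (i : ℕ) (hi : i ≤ m + 1) : x i ∈ Metric.ball a r := by
      have htravel : dist (x 0) (x i) ≤ ∑ j ∈ Finset.range (m + 1), dist (x j) (x (j + 1)) :=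
        (dist_le_range_sum_dist x i).trans
          (Finset.sum_le_sum_of_subset_of_nonneg (Finset.range_mono hi) fun _ _ _ => dist_nonneg)
      rw [Metric.mem_ball]
      linarith [dist_triangle_left (x i) a (x 0)]
    rw [Finset.sum_range_succ]
    linarith [hstep m (htrapped m m.le_succ) (htrapped (m + 1) le_rfl)]

lemma summable_dist_of_mapClusterPt (ha : MapClusterPt a atTop x) (hPlim : Tendsto P atTop (𝓝 0))
    (hP : ∀ᶠ k in atTop, dist (x k) (x (k + 1)) ≤ P k) {U : Set X} (hU : U ∈ 𝓝 a)
    (hstep : ∀ᶠ k in atTop, x k ∈ U → x (k + 1) ∈ U →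
      dist (x (k + 1)) (x (k + 2)) + P (k + 1) ≤ P k) :
    Summable fun k => dist (x k) (x (k + 1)) := by
  obtain ⟨r, hr, hrU⟩ := Metric.mem_nhds_iff.1 hU
  have hsmall : ∀ᶠ k in atTop, P k < r / 4 := hPlim.eventually_lt_const (by positivity)
  obtain ⟨N, hNa, hN⟩ := ((mapClusterPt_iff_frequently.1 ha _
    (Metric.ball_mem_nhds a (half_pos hr))).and_eventually
      (hsmall.and (eventually_forall_ge_atTop.2 (hP.and hstep)))).exists
  obtain ⟨hPN, hN⟩ := hN
  have hbound := sum_dist_add_le_of_mem_ball (x := fun k => x (N + k)) (P := fun k => P (N + k))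
    (fun k => (hN _ (N.le_add_right k)).1)
    (fun k hk hk' => (hN _ (N.le_add_right k)).2 (hrU hk) (hrU hk'))
    (by rw [add_zero]; linarith [Metric.mem_ball.1 hNa])
  refine (summable_nat_add_iff N).1 ((summable_nat_add_iff 1).1 ?_)
  simp_rw [add_comm _ N]
  refine summable_of_sum_range_le (c := P N) (fun _ => dist_nonneg) fun m => ?_
  have hPm : 0 ≤ P (N + m) := dist_nonneg.trans (hN _ (N.le_add_right m)).1
  exact (le_add_of_nonneg_right hPm).trans (hbound m)

lemma tendsto_dist_succ_of_sq_le {c : ℕ → ℝ} {A b : ℝ}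
    (hdesc : ∀ k, dist (x k) (x (k + 1)) ^ 2 ≤ A * (c k - c (k + 1)))
    (hc : Tendsto c atTop (𝓝 b)) : Tendsto (fun k => dist (x k) (x (k + 1))) atTop (𝓝 0) := by
  have hsqrt : Tendsto (fun k => √(A * (c k - c (k + 1)))) atTop (𝓝 0) := by
    simpa using! ((hc.sub (hc.comp (tendsto_add_atTop_nat 1))).const_mul A).sqrt
  exact squeeze_zero (fun _ => dist_nonneg) (fun k => Real.le_sqrt_of_sq_le (hdesc k)) hsqrt

lemma two_mul_le_add_of_sq_le_of_le_mul {A B d d' Δc Δψ ν : ℝ} (hA : 0 ≤ A) (hB : 0 ≤ B)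
    (hd : 0 ≤ d) (hψ : 0 ≤ Δψ) (hdesc : d' ^ 2 ≤ A * Δc) (hdrop : Δc ≤ ν * Δψ)
    (hrel : ν ≤ B * d) : 2 * d' ≤ d + A * B * Δψ := by
  refine two_mul_le_add_of_sq_le_mul hd (by positivity) ?_
  calc d' ^ 2 ≤ A * Δc := hdesc
    _ ≤ A * (B * d * Δψ) := by gcongr; exact hdrop.trans (by gcongr)
    _ = d * (A * B * Δψ) := by ring

end Trapping

section KurdykaLojasiewicz

variable {n : ℕ} {Φ : EuclideanSpace ℝ (Fin n) → EReal} {a : EuclideanSpace ℝ (Fin n)}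

lemma one_le_mul_norm_of_one_le_mul_infEDist {V : Type*} [SeminormedAddCommGroup V] {S : Set V}
    {v : V} {r : ℝ} (hr : 0 ≤ r) (hS : 1 ≤ ENNReal.ofReal r * Metric.infEDist 0 S) (hv : v ∈ S) :
    1 ≤ r * ‖v‖ := by
  rw [← ENNReal.one_le_ofReal, ENNReal.ofReal_mul hr, ofReal_norm, ← edist_zero_right, edist_comm]
  exact hS.trans (by gcongr; exact Metric.infEDist_le_edist_of_mem hv)

lemma KLProperty.exists_sub_le (hKL : KLProperty Φ a) {ca : ℝ} (ha : Φ a = ca) :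
    ∃ η > 0, ∃ φ : ℝ → ℝ, φ 0 = 0 ∧ MonotoneOn φ (Set.Ico 0 η) ∧
      ContinuousWithinAt φ (Set.Ico 0 η) 0 ∧
      ∀ᶠ z in 𝓝 a, ∀ v ∈ lsub Φ z, ∀ s t : ℝ, Φ z = s → ca ≤ t → t ≤ s → s < ca + η →
        s - t ≤ ‖v‖ * (φ (s - ca) - φ (t - ca)) := by
  obtain ⟨η, hη, O, hO, φ, φ', hφ0, -, hφcont, hφconc, hφ', hφKL⟩ := hKL
  refine ⟨η, hη, φ, hφ0, ?_, hφcont 0 (Set.left_mem_Ico.2 hη), ?_⟩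
  · refine monotoneOn_of_deriv_nonneg (convex_Ico 0 η) hφcont ?_ ?_ <;> rw [interior_Ico]
    · exact fun s hs => (hφ' s hs).1.differentiableAt.differentiableWithinAt
    · exact fun s hs => (hφ' s hs).1.deriv ▸ (hφ' s hs).2.le
  filter_upwards [hO] with z hz v hv s t hs hat hts hsη
  rcases hts.eq_or_lt with rfl | hts
  · simp
  have hsmem : s - ca ∈ Set.Ioo 0 η := ⟨by linarith, by linarith⟩
  have hKLs := hφKL z hz (by rw [ha, hs]; exact_mod_cast hat.trans_lt hts)
    (by rw [ha, hs]; exact_mod_cast hsη)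
  rw [ha, hs, EReal.toReal_coe, EReal.toReal_coe] at hKLs
  have hslope := hφconc.le_slope_of_hasDerivAt (x := t - ca) ⟨by linarith, by linarith⟩
    (Set.Ioo_subset_Ico_self hsmem) (by linarith) (hφ' _ hsmem).1
  rw [slope_def_field, le_div_iff₀ (by linarith)] at hslope
  have hv1 := one_le_mul_norm_of_one_le_mul_infEDist (hφ' _ hsmem).2.le hKLs hv
  calc s - t ≤ φ' (s - ca) * ‖v‖ * (s - t) := le_mul_of_one_le_left (by linarith) hv1
    _ = ‖v‖ * (φ' (s - ca) * (s - ca - (t - ca))) := by ring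
    _ ≤ ‖v‖ * (φ (s - ca) - φ (t - ca)) := by gcongr

theorem summable_dist_of_KLProperty (hKL : KLProperty Φ a) {x : ℕ → EuclideanSpace ℝ (Fin n)}
    (ha : MapClusterPt a atTop x) {c : ℕ → ℝ} {ca A B : ℝ} (hΦa : Φ a = ca)
    (hΦx : ∀ k, Φ (x k) = c k) (hcanti : Antitone c) (hclim : Tendsto c atTop (𝓝 ca)) (hA : 0 ≤ A)
    (hdesc : ∀ k, dist (x k) (x (k + 1)) ^ 2 ≤ A * (c k - c (k + 1))) (hB : 0 ≤ B)
    {U : Set (EuclideanSpace ℝ (Fin n))} (hU : U ∈ 𝓝 a)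
    (hrel : ∀ k, x k ∈ U → x (k + 1) ∈ U →
      ∃ v ∈ lsub Φ (x (k + 1)), ‖v‖ ≤ B * dist (x k) (x (k + 1))) :
    Summable fun k => dist (x k) (x (k + 1)) := by
  obtain ⟨η, hη, φ, hφ0, hφmono, hφcont, hφ⟩ := hKL.exists_sub_le hΦa
  have hgap (k : ℕ) : ca ≤ c k := hcanti.le_of_tendsto hclim k
  have hmem : ∀ᶠ k in atTop, c k - ca ∈ Set.Ico 0 η := by
    filter_upwards [hclim.eventually_lt_const (lt_add_of_pos_right ca hη)] with k hk
    exact ⟨sub_nonneg.2 (hgap k), by linarith⟩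
  have hmem_succ := (tendsto_add_atTop_nat 1).eventually hmem
  have hψlim : Tendsto (fun k => φ (c (k + 1) - ca)) atTop (𝓝 0) := by
    have hcsub : Tendsto (fun k => c (k + 1) - ca) atTop (𝓝[Set.Ico 0 η] 0) :=
      tendsto_nhdsWithin_iff.2
        ⟨by simpa using (hclim.comp (tendsto_add_atTop_nat 1)).sub_const ca, hmem_succ⟩
    simpa [hφ0] using! hφcont.tendsto.comp hcsub
  have hdlim := tendsto_dist_succ_of_sq_le hdesc hclim
  refine summable_dist_of_mapClusterPt ha (U := U ∩ _)
    (P := fun k => dist (x k) (x (k + 1)) + A * B * φ (c (k + 1) - ca))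
    (by simpa using hdlim.add (hψlim.const_mul (A * B))) ?_ (inter_mem hU hφ) ?_
  · filter_upwards [hmem_succ] with k hk
    have := hφmono (Set.left_mem_Ico.2 hη) hk hk.1
    rw [hφ0] at this
    exact le_add_of_nonneg_right (by positivity)
  · filter_upwards [hmem_succ, (tendsto_add_atTop_nat 2).eventually hmem] with k hk hk' hx hx'
    obtain ⟨v, hv, hvB⟩ := hrel k hx.1 hx'.1
    have hψ := sub_nonneg.2 (hφmono hk' hk (by linarith [hcanti (k + 1).le_succ]))
    have hdrop : c (k + 1) - c (k + 2) ≤ ‖v‖ * (φ (c (k + 1) - ca) - φ (c (k + 2) - ca)) :=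
      hx'.2 v hv _ _ (hΦx _) (hgap _) (hcanti (k + 1).le_succ) (by linarith [hk.2])
    linarith [two_mul_le_add_of_sq_le_of_le_mul hA hB dist_nonneg hψ (hdesc (k + 1)) hdrop hvB]

end KurdykaLojasiewicz

section ProximalGradientSubgradient

variable {n : ℕ} {f : EuclideanSpace ℝ (Fin n) → EReal} {g h : EuclideanSpace ℝ (Fin n) → ℝ}
  {g' h' : EuclideanSpace ℝ (Fin n) → EuclideanSpace ℝ (Fin n)}

/-- The vector `F(x) ∇g(x) − ∇h(x)`; the point `x` is critical for `F = (f + h) / g` when this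
vector lies in `fsub f x`. The gradients `g'` and `h'` are passed as functions. -/
def criticalVector (f : EuclideanSpace ℝ (Fin n) → EReal) (g h : EuclideanSpace ℝ (Fin n) → ℝ)
    (g' h' : EuclideanSpace ℝ (Fin n) → EuclideanSpace ℝ (Fin n))
    (x : EuclideanSpace ℝ (Fin n)) : EuclideanSpace ℝ (Fin n) :=
  fracValue f g h x • g' x - h' x

/-- `v` is obtained from `u` by one iteration of the proximal-gradient-subgradient algorithm with
step size `a`. -/
def IsPGSAStep (f : EuclideanSpace ℝ (Fin n) → EReal) (g h : EuclideanSpace ℝ (Fin n) → ℝ)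
    (h' : EuclideanSpace ℝ (Fin n) → EuclideanSpace ℝ (Fin n)) (a : ℝ)
    (u v : EuclideanSpace ℝ (Fin n)) : Prop :=
  ∃ y ∈ csub g u,
    v ∈ proxSet (fun z => (a : EReal) * f z) (u - a • h' u + (a * fracValue f g h u) • y)

/-- A fractional program whose denominator is differentiable off its zero set, with gradient `g'`,
and whose smooth numerator term `h` has the `L`-Lipschitz gradient `h'`. -/
structure IsSmoothFractionalProgram (f : EuclideanSpace ℝ (Fin n) → EReal)
    (g h : EuclideanSpace ℝ (Fin n) → ℝ)
    (g' h' : EuclideanSpace ℝ (Fin n) → EuclideanSpace ℝ (Fin n)) (L : NNReal) : Prop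
    extends IsFractionalProgram f g h where
  hasGradientAt_denominator (z : EuclideanSpace ℝ (Fin n)) : g z ≠ 0 → HasGradientAt g (g' z) z
  hasGradientAt_numerator (z : EuclideanSpace ℝ (Fin n)) : HasGradientAt h (h' z) z
  lipschitzWith_gradient : LipschitzWith L h'

variable {L : NNReal}

namespace IsSmoothFractionalProgram

lemma continuous_numerator (hF : IsSmoothFractionalProgram f g h g' h' L) : Continuous h :=
  continuous_iff_continuousAt.2 fun z => (hF.hasGradientAt_numerator z).continuousAt

lemma locallyLipschitzOn_fracValue (hF : IsSmoothFractionalProgram f g h g' h' L)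
    (hf : LocallyLipschitzOn {z | f z ≠ ⊤} fun z => (f z).toReal) (hg : Continuous g)
    (hg' : ContinuousOn g' {z | g z ≠ 0}) :
    LocallyLipschitzOn (fracDom f g) (fracValue f g h) := by
  have hh : LocallyLipschitzOn Set.univ h := locallyLipschitzOn_of_hasGradientAt isOpen_univ
    (fun z _ => hF.hasGradientAt_numerator z) hF.lipschitzWith_gradient.continuous.continuousOn
  have hgΩ : LocallyLipschitzOn {z | g z ≠ 0} g := locallyLipschitzOn_of_hasGradientAt
    (isOpen_ne_fun hg continuous_const) hF.hasGradientAt_denominator hg'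
  exact locallyLipschitzOn_div
    ((hf.mono fun _ hz => hz.2).add (hh.mono (Set.subset_univ _)))
    (hgΩ.mono fun _ hz => hz.1) fun _ hz => hz.1

lemma locallyLipschitzOn_criticalVector (hF : IsSmoothFractionalProgram f g h g' h' L)
    (hf : LocallyLipschitzOn {z | f z ≠ ⊤} fun z => (f z).toReal) (hg : Continuous g)
    (hg' : LocallyLipschitzOn {z | g z ≠ 0} g') :
    LocallyLipschitzOn (fracDom f g) (criticalVector f g h g' h') :=
  (locallyLipschitzOn_smul (hF.locallyLipschitzOn_fracValue hf hg hg'.continuousOn)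
    (hg'.mono fun _ hz => hz.1)).sub hF.lipschitzWith_gradient.locallyLipschitz.locallyLipschitzOn

lemma exists_relative_error_bound (hF : IsSmoothFractionalProgram f g h g' h' L)
    (hcrit : LocallyLipschitzOn (fracDom f g) (criticalVector f g h g' h'))
    {xh : EuclideanSpace ℝ (Fin n)} (hxh : xh ∈ fracDom f g) {αlo : ℝ} (hαlo : 0 < αlo) :
    ∃ B ≥ 0, ∃ U ∈ 𝓝 xh, ∀ u ∈ U ∩ fracDom f g, ∀ v ∈ U ∩ fracDom f g, ∀ a ≥ αlo,
      criticalVector f g h g' h' u - a⁻¹ • (v - u) ∈ fsub f v →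
        ∃ w ∈ lsub (Ffrac f g h) v, ‖w‖ ≤ B * dist u v := by
  obtain ⟨K, t, ht, hK⟩ := hcrit hxh
  obtain ⟨U, hU, hUt⟩ := mem_nhdsWithin_iff_exists_mem_nhds_inter.1 ht
  have hgxh : 0 < g xh := hF.denominator_pos xh hxh
  have hgcont : ContinuousAt g xh := (hF.hasGradientAt_denominator xh hxh.1).continuousAt
  refine ⟨(g xh / 2)⁻¹ * (K + αlo⁻¹), by positivity, U ∩ {z | g xh / 2 < g z},
    inter_mem hU (hgcont.eventually_const_lt (half_lt_self hgxh)), ?_⟩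
  rintro u ⟨⟨huU, -⟩, hu⟩ v ⟨⟨hvU, hgv : g xh / 2 < g v⟩, hv⟩ a ha hfsub
  have ha0 : 0 < a := hαlo.trans_le ha
  have hgv0 : 0 < g v := (half_pos hgxh).trans hgv
  refine ⟨_, fsub_subset_lsub _ _ (inv_smul_mem_fsub_Ffrac hF.ne_bot
    (hF.hasGradientAt_denominator v hv.1) (hF.hasGradientAt_numerator v) hgv0 hfsub), ?_⟩
  have hnorm : ‖criticalVector f g h g' h' u - criticalVector f g h g' h' v - a⁻¹ • (v - u)‖ ≤
      (K + αlo⁻¹) * dist u v := by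
    refine (norm_sub_le _ _).trans ?_
    rw [norm_smul, Real.norm_of_nonneg (by positivity), ← dist_eq_norm, ← dist_eq_norm,
      dist_comm v u, add_mul]
    gcongr
    exact hK.dist_le_mul u (hUt ⟨huU, hu⟩) v (hUt ⟨hvU, hv⟩)
  have hregroup : criticalVector f g h g' h' u - a⁻¹ • (v - u) + h' v - fracValue f g h v • g' v =
      criticalVector f g h g' h' u - criticalVector f g h g' h' v - a⁻¹ • (v - u) := by
    simp only [criticalVector]
    abel
  rw [hregroup, norm_smul, Real.norm_of_nonneg (by positivity), mul_assoc]
  gcongr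

end IsSmoothFractionalProgram

lemma one_div_two_mul_sub_half_nonneg {a b : ℝ} (ha : 0 < a) (hab : a * b ≤ 1) :
    0 ≤ 1 / (2 * a) - b / 2 := by
  rw [sub_nonneg, div_le_div_iff₀ two_pos (by positivity)]
  linarith

namespace IsPGSAStep

variable {a : ℝ} {u v : EuclideanSpace ℝ (Fin n)}

lemma gradient_mem_csub (huv : IsPGSAStep f g h h' a u v) (hgu : HasGradientAt g (g' u) u) :
    g' u ∈ csub g u := by
  obtain ⟨y, hy, -⟩ := huv
  exact eq_of_mem_csub_of_hasGradientAt hy hgu ▸ hy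

lemma isProxSubgradient (huv : IsPGSAStep f g h h' a u v) (hbot : ∀ z, f z ≠ ⊥)
    (hu : f u ≠ ⊤) (ha : 0 < a) (hgu : HasGradientAt g (g' u) u) :
    IsProxSubgradient f (1 / (2 * a)) v (criticalVector f g h g' h' u - a⁻¹ • (v - u)) := by
  obtain ⟨y, hy, hv⟩ := huv
  rw [eq_of_mem_csub_of_hasGradientAt hy hgu] at hv
  convert IsProxSubgradient.of_mem_proxSet ha hbot ⟨u, hu⟩ hv using 1
  rw [criticalVector]
  match_scalars <;> field_simp

lemma le_fracValue_mul_sub (huv : IsPGSAStep f g h h' a u v)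
    (hF : IsSmoothFractionalProgram f g h g' h' L) (hu : u ∈ fracDom f g) (ha : 0 < a) :
    (f v).toReal ≤ fracValue f g h u * g v - h v - (1 / (2 * a) - L / 2) * ‖v - u‖ ^ 2 := by
  have hgu := hF.hasGradientAt_denominator u hu.1
  have hprox := (huv.isProxSubgradient hF.ne_bot hu.2 ha hgu).2 u hu.2
  have hinner : ⟪criticalVector f g h g' h' u - a⁻¹ • (v - u), u - v⟫ =
      -(fracValue f g h u * ⟪g' u, v - u⟫) + ⟪h' u, v - u⟫ + a⁻¹ * ‖v - u‖ ^ 2 := by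
    rw [← neg_sub v u, inner_neg_right, criticalVector, inner_sub_left, inner_sub_left,
      inner_smul_left, inner_smul_left, real_inner_self_eq_norm_sq]
    simp only [conj_trivial]
    ring
  have hnum : fracValue f g h u * g u = (f u).toReal + h u := fracValue_mul_denominator hu.1
  have hsubgrad := mul_le_mul_of_nonneg_left (huv.gradient_mem_csub hgu v) (hF.fracValue_nonneg hu)
  have hdescent := le_add_inner_add_sq_of_lipschitzWith_gradient hF.hasGradientAt_numerator
    hF.lipschitzWith_gradient u v
  have hhalf : a⁻¹ = 2 * (1 / (2 * a)) := by field_simp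
  rw [hinner, norm_sub_rev u v, hhalf] at hprox
  linarith

lemma mem_fracDom_and_sq_le (huv : IsPGSAStep f g h h' a u v)
    (hF : IsSmoothFractionalProgram f g h g' h' L) (hu : u ∈ fracDom f g) (ha : 0 < a)
    (haL : a * L ≤ 1) :
    v ∈ fracDom f g ∧ (1 / (2 * a) - L / 2) * ‖v - u‖ ^ 2 ≤
      g v * (fracValue f g h u - fracValue f g h v) := by
  have hvt : f v ≠ ⊤ :=
    (huv.isProxSubgradient hF.ne_bot hu.2 ha (hF.hasGradientAt_denominator u hu.1)).1
  have hfv := huv.le_fracValue_mul_sub hF hu ha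
  have hcoeff := one_div_two_mul_sub_half_nonneg ha haL
  have hle : Ffrac f g h v ≤ (fracValue f g h u : ℝ) := by
    rw [hF.Ffrac_le_coe_iff, ← EReal.coe_toReal hvt (hF.ne_bot v), EReal.coe_le_coe_iff]
    linarith [mul_nonneg hcoeff (sq_nonneg ‖v - u‖)]
  have hv : v ∈ fracDom f g := Ffrac_ne_top_iff.1 (hle.trans_lt (EReal.coe_lt_top _)).ne
  refine ⟨hv, ?_⟩
  linarith [fracValue_mul_denominator (f := f) (h := h) hv.1]

end IsPGSAStep

/-- `x` is generated by the proximal-gradient-subgradient algorithm from a point of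
`fracDom f g`, with step sizes in `[αlo, αhi]`. -/
structure IsPGSASequence (f : EuclideanSpace ℝ (Fin n) → EReal)
    (g h : EuclideanSpace ℝ (Fin n) → ℝ)
    (h' : EuclideanSpace ℝ (Fin n) → EuclideanSpace ℝ (Fin n)) (αlo αhi : ℝ)
    (x : ℕ → EuclideanSpace ℝ (Fin n)) : Prop where
  zero_mem : x 0 ∈ fracDom f g
  step (k : ℕ) : ∃ a ∈ Set.Icc αlo αhi, IsPGSAStep f g h h' a (x k) (x (k + 1))

namespace IsPGSASequence

variable {αlo αhi : ℝ} {x : ℕ → EuclideanSpace ℝ (Fin n)}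

lemma mem_fracDom (hx : IsPGSASequence f g h h' αlo αhi x)
    (hF : IsSmoothFractionalProgram f g h g' h' L) (hαlo : 0 < αlo) (hαhi : αhi * L ≤ 1) (k : ℕ) :
    x k ∈ fracDom f g := by
  induction k with
  | zero => exact hx.zero_mem
  | succ k ih =>
    obtain ⟨a, ha, hstep⟩ := hx.step k
    have haL : a * L ≤ 1 := (mul_le_mul_of_nonneg_right ha.2 L.2).trans hαhi
    exact (hstep.mem_fracDom_and_sq_le hF ih (hαlo.trans_le ha.1) haL).1

lemma sq_dist_le (hx : IsPGSASequence f g h h' αlo αhi x)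
    (hF : IsSmoothFractionalProgram f g h g' h' L) (hαlo : 0 < αlo) (hαhi : αhi * L ≤ 1) (k : ℕ) :
    (1 / (2 * αhi) - L / 2) * dist (x k) (x (k + 1)) ^ 2 ≤
      g (x (k + 1)) * (fracValue f g h (x k) - fracValue f g h (x (k + 1))) := by
  obtain ⟨a, ha, hstep⟩ := hx.step k
  have ha0 : 0 < a := hαlo.trans_le ha.1
  have haL : a * L ≤ 1 := (mul_le_mul_of_nonneg_right ha.2 L.2).trans hαhi
  rw [dist_eq_norm']
  refine le_trans ?_ (hstep.mem_fracDom_and_sq_le hF (hx.mem_fracDom hF hαlo hαhi k) ha0 haL).2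
  gcongr
  exact ha.2

lemma antitone_fracValue (hx : IsPGSASequence f g h h' αlo αhi x)
    (hF : IsSmoothFractionalProgram f g h g' h' L) (hαlo : 0 < αlo) (hαhi : αhi * L ≤ 1) :
    Antitone fun k => fracValue f g h (x k) := by
  obtain ⟨a, ha, -⟩ := hx.step 0
  have hcoeff := one_div_two_mul_sub_half_nonneg (hαlo.trans_le (ha.1.trans ha.2)) hαhi
  refine antitone_nat_of_succ_le fun k => sub_nonneg.1 ?_
  have hgpos := hF.denominator_pos _ (hx.mem_fracDom hF hαlo hαhi (k + 1))
  exact nonneg_of_mul_nonneg_right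
    ((mul_nonneg hcoeff (sq_nonneg _)).trans (hx.sq_dist_le hF hαlo hαhi k)) hgpos

lemma exists_isCompact (hx : IsPGSASequence f g h h' αlo αhi x)
    (hF : IsSmoothFractionalProgram f g h g' h' L) (hf : LowerSemicontinuous f) (hg : Continuous g)
    (hbdd : ∀ t : ℝ, Bornology.IsBounded {z | Ffrac f g h z ≤ (t : EReal)}) (hαlo : 0 < αlo)
    (hαhi : αhi * L ≤ 1) :
    ∃ K ⊆ fracDom f g, IsCompact K ∧ ∀ k, x k ∈ K := by
  refine ⟨{z | Ffrac f g h z ≤ (fracValue f g h (x 0) : ℝ)},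
    fun z hz => Ffrac_ne_top_iff.1 (lt_of_le_of_lt hz (EReal.coe_lt_top _)).ne,
    Metric.isCompact_of_isClosed_isBounded
      (hF.isClosed_Ffrac_le hf hg hF.continuous_numerator _) (hbdd _), fun k => ?_⟩
  rw [Set.mem_ofPred_eq, Ffrac_of_mem (hx.mem_fracDom hF hαlo hαhi k), EReal.coe_le_coe_iff]
  exact hx.antitone_fracValue hF hαlo hαhi k.zero_le

lemma exists_sq_dist_le (hx : IsPGSASequence f g h h' αlo αhi x)
    (hF : IsSmoothFractionalProgram f g h g' h' L) (hαlo : 0 < αlo) (hαhi : αhi * L < 1)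
    {M : ℝ} (hM : ∀ k, g (x k) ≤ M) :
    ∃ A ≥ 0, ∀ k, dist (x k) (x (k + 1)) ^ 2 ≤
      A * (fracValue f g h (x k) - fracValue f g h (x (k + 1))) := by
  obtain ⟨a, ha, -⟩ := hx.step 0
  have hαhi0 : 0 < αhi := hαlo.trans_le (ha.1.trans ha.2)
  have hcoeff : 0 < 1 / (2 * αhi) - (L : ℝ) / 2 := by
    rw [sub_pos, div_lt_div_iff₀ two_pos (by positivity)]
    linarith
  have hM0 : 0 ≤ M :=
    (hF.denominator_pos _ (hx.mem_fracDom hF hαlo hαhi.le 0)).le.trans (hM 0)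
  refine ⟨M / (1 / (2 * αhi) - L / 2), by positivity, fun k => ?_⟩
  rw [div_mul_eq_mul_div, le_div_iff₀ hcoeff, mul_comm]
  refine (hx.sq_dist_le hF hαlo hαhi.le k).trans ?_
  gcongr
  · exact sub_nonneg.2 (hx.antitone_fracValue hF hαlo hαhi.le k.le_succ)
  · exact hM (k + 1)

lemma summable_dist (hx : IsPGSASequence f g h h' αlo αhi x)
    (hF : IsSmoothFractionalProgram f g h g' h' L) (hαlo : 0 < αlo) (hαhi : αhi * L < 1)
    (hcrit : LocallyLipschitzOn (fracDom f g) (criticalVector f g h g' h'))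
    {M : ℝ} (hM : ∀ k, g (x k) ≤ M) {xh : EuclideanSpace ℝ (Fin n)} (hxh : xh ∈ fracDom f g)
    (hcluster : MapClusterPt xh atTop x)
    (hlim : Tendsto (fun k => fracValue f g h (x k)) atTop (𝓝 (fracValue f g h xh)))
    (hKL : KLProperty (Ffrac f g h) xh) : Summable fun k => dist (x k) (x (k + 1)) := by
  have hdom := hx.mem_fracDom hF hαlo hαhi.le
  obtain ⟨A, hA, hdesc⟩ := hx.exists_sq_dist_le hF hαlo hαhi hM
  obtain ⟨B, hB, U, hU, hrel⟩ := hF.exists_relative_error_bound hcrit hxh hαlo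
  refine summable_dist_of_KLProperty hKL hcluster (Ffrac_of_mem hxh)
    (fun k => Ffrac_of_mem (hdom k)) (hx.antitone_fracValue hF hαlo hαhi.le) hlim hA hdesc hB hU ?_
  intro k hk hk'
  obtain ⟨a, ha, hstep⟩ := hx.step k
  have hsub := hstep.isProxSubgradient hF.ne_bot (hdom k).2 (hαlo.trans_le ha.1)
    (hF.hasGradientAt_denominator _ (hdom k).1)
  exact hrel _ ⟨hk, hdom k⟩ _ ⟨hk', hdom (k + 1)⟩ a ha.1 (hsub.mem_fsub hF.ne_bot)

lemma criticalVector_mem_fsub (hx : IsPGSASequence f g h h' αlo αhi x)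
    (hF : IsSmoothFractionalProgram f g h g' h' L) (hαlo : 0 < αlo) (hαhi : αhi * L ≤ 1)
    (hf : ContinuousOn (fun z => (f z).toReal) {z | f z ≠ ⊤})
    (hcrit : ContinuousOn (criticalVector f g h g' h') (fracDom f g))
    {xs : EuclideanSpace ℝ (Fin n)} (hxs : xs ∈ fracDom f g) (hlim : Tendsto x atTop (𝓝 xs)) :
    criticalVector f g h g' h' xs ∈ fsub f xs := by
  have hdom := hx.mem_fracDom hF hαlo hαhi
  choose α hα hstep using hx.step
  have hα0 (k : ℕ) : 0 < α k := hαlo.trans_le (hα k).1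
  have hlim_succ : Tendsto (fun k => x (k + 1)) atTop (𝓝 xs) :=
    hlim.comp (tendsto_add_atTop_nat 1)
  have hcritlim : Tendsto (fun k => criticalVector f g h g' h' (x k)) atTop
      (𝓝 (criticalVector f g h g' h' xs)) :=
    (hcrit xs hxs).tendsto.comp (tendsto_nhdsWithin_iff.2 ⟨hlim, .of_forall hdom⟩)
  have hflim : Tendsto (fun k => (f (x (k + 1))).toReal) atTop (𝓝 (f xs).toReal) :=
    (hf xs hxs.2).tendsto.comp
      (tendsto_nhdsWithin_iff.2 ⟨hlim_succ, .of_forall fun k => (hdom (k + 1)).2⟩)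
  have hsteplim : Tendsto (fun k => (α k)⁻¹ • (x (k + 1) - x k)) atTop (𝓝 0) := by
    refine squeeze_zero_norm (a := fun k => αlo⁻¹ * ‖x (k + 1) - x k‖) (fun k => ?_) ?_
    · rw [norm_smul, Real.norm_of_nonneg (inv_nonneg.2 (hα0 k).le)]
      gcongr
      exact (hα k).1
    · simpa using (hlim_succ.sub hlim).norm.const_mul αlo⁻¹
  have hprox (k : ℕ) : IsProxSubgradient f (1 / (2 * αlo)) (x (k + 1))
      (criticalVector f g h g' h' (x k) - (α k)⁻¹ • (x (k + 1) - x k)) :=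
    ((hstep k).isProxSubgradient hF.ne_bot (hdom k).2 (hα0 k)
      (hF.hasGradientAt_denominator _ (hdom k).1)).mono (by gcongr; exact (hα k).1)
  exact (IsProxSubgradient.of_tendsto hprox hlim_succ hflim
    (by simpa using hcritlim.sub hsteplim) hxs.2).mem_fsub hF.ne_bot

end IsPGSASequence

end ProximalGradientSubgradient

theorem pgsa_global_convergence_general {n : ℕ} {f : EuclideanSpace ℝ (Fin n) → EReal}
    {g h : EuclideanSpace ℝ (Fin n) → ℝ}
    {g' h' : EuclideanSpace ℝ (Fin n) → EuclideanSpace ℝ (Fin n)} {L : NNReal}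
    (hF : IsSmoothFractionalProgram f g h g' h' L) (hf_lsc : LowerSemicontinuous f)
    (hg : Continuous g)
    (hbdd : ∀ t : ℝ, Bornology.IsBounded {z | Ffrac f g h z ≤ (t : EReal)})
    (hf : LocallyLipschitzOn {z | f z ≠ ⊤} fun z => (f z).toReal)
    (hg' : LocallyLipschitzOn {z | g z ≠ 0} g')
    (hKL : ∀ z ∈ fracDom f g, KLProperty (Ffrac f g h) z)
    {αlo αhi : ℝ} (hαlo : 0 < αlo) (hαhi : αhi * L < 1) {x : ℕ → EuclideanSpace ℝ (Fin n)}
    (hx : IsPGSASequence f g h h' αlo αhi x) :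
    Summable (fun k => ‖x (k + 1) - x k‖) ∧
      ∃ xs, Tendsto x atTop (𝓝 xs) ∧ xs ∈ fracDom f g ∧
        (Ffrac f g h xs).toReal • g' xs - h' xs ∈ fsub f xs := by
  obtain ⟨K, hKdom, hK, hxK⟩ := hx.exists_isCompact hF hf_lsc hg hbdd hαlo hαhi.le
  obtain ⟨M, hM⟩ := hK.bddAbove_image hg.continuousOn
  obtain ⟨xh, hxhK, ι, hι, hsubseq⟩ := hK.tendsto_subseq hxK
  have hxh : xh ∈ fracDom f g := hKdom hxhK
  have hvalue : Tendsto (fun k => fracValue f g h (x k)) atTop (𝓝 (fracValue f g h xh)) := by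
    rw [tendsto_iff_tendsto_subseq_of_antitone (hx.antitone_fracValue hF hαlo hαhi.le)
      hι.tendsto_atTop]
    exact (hF.locallyLipschitzOn_fracValue hf hg hg'.continuousOn).continuousOn xh hxh
      |>.tendsto.comp (tendsto_nhdsWithin_iff.2 ⟨hsubseq, .of_forall fun k => hKdom (hxK _)⟩)
  have hcrit := hF.locallyLipschitzOn_criticalVector hf hg hg'
  have hsummable := hx.summable_dist hF hαlo hαhi hcrit
    (fun k => hM (Set.mem_image_of_mem g (hxK k))) hxh
    (hsubseq.mapClusterPt.of_comp hι.tendsto_atTop) hvalue (hKL xh hxh)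
  have hlim : Tendsto x atTop (𝓝 xh) := tendsto_nhds_of_cauchySeq_of_subseq
    (cauchySeq_of_summable_dist hsummable) hι.tendsto_atTop hsubseq
  refine ⟨by simpa only [dist_eq_norm'] using hsummable, xh, hlim, hxh, ?_⟩
  rw [Ffrac_of_mem hxh, EReal.toReal_coe]
  exact hx.criticalVector_mem_fsub hF hαlo hαhi.le hf.continuousOn hcrit.continuousOn hxh hlim

/-- Theorem 4.9: global convergence of PGSA under the KL property. -/
theorem pgsa_global_convergence
    {n : ℕ} (hn : 1 ≤ n)
    (f : EuclideanSpace ℝ (Fin n) → EReal) (g h : EuclideanSpace ℝ (Fin n) → ℝ)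
    (h' : EuclideanSpace ℝ (Fin n) → EuclideanSpace ℝ (Fin n)) (L : ℝ)
    (hf_ne_bot : ∀ z, f z ≠ ⊥) (hf_proper : ∃ z, f z ≠ ⊤)
    (hf_lsc : LowerSemicontinuous f)
    (hf_bdd : ∃ m : ℝ, ∀ z, (m : EReal) ≤ f z)
    (hf_cont : ContinuousOn f {z | f z ≠ ⊤})
    (hg_cvx : ConvexOn ℝ Set.univ g)
    (hL : 0 < L)
    (hh_grad : ∀ z, HasGradientAt h (h' z) z)
    (hh_lip : LipschitzWith (Real.toNNReal L) h')
    (hΩ : ∃ z, g z ≠ 0)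
    (hfh : ∀ z, 0 ≤ f z + ((h z : ℝ) : EReal))
    (hg_pos : ∀ z, f z ≠ ⊤ → g z ≠ 0 → 0 < g z)
    (hA1 : ∀ z, g z = 0 → f z + ((h z : ℝ) : EReal) ≠ 0)
    (hA2 : ∀ t : ℝ, Bornology.IsBounded {z | Ffrac f g h z ≤ (t : EReal)})
    (hA3 : ∀ z, f z ≠ ⊤ → ∃ K : ℝ, ∃ δ > (0 : ℝ), ∀ u, ‖u - z‖ < δ → f u ≠ ⊤ →
      ∀ v, ‖v - z‖ < δ → f v ≠ ⊤ → |(f u).toReal - (f v).toReal| ≤ K * ‖u - v‖)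
    (g' : EuclideanSpace ℝ (Fin n) → EuclideanSpace ℝ (Fin n))
    (hA4_grad : ∀ z, g z ≠ 0 → HasGradientAt g (g' z) z)
    (hA4_cont : ContinuousOn g' {z | g z ≠ 0})
    (hA4_lip : ∀ z, g z ≠ 0 → ∃ K : NNReal, ∃ δ > (0 : ℝ),
      LipschitzOnWith K g' (Metric.ball z δ ∩ {w | g w ≠ 0}))
    (hKL : ∀ z, g z ≠ 0 ∧ f z ≠ ⊤ → KLProperty (Ffrac f g h) z)
    (x y : ℕ → EuclideanSpace ℝ (Fin n)) (c α : ℕ → ℝ) (αlo αhi : ℝ)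
    (hx0 : g (x 0) ≠ 0 ∧ f (x 0) ≠ ⊤)
    (hαlo : 0 < αlo) (hαhi : αhi < 1 / L) (hα : ∀ k, αlo ≤ α k ∧ α k ≤ αhi)
    (hy : ∀ k, y (k + 1) ∈ csub g (x k))
    (hc : ∀ k, c k = ((f (x k)).toReal + h (x k)) / g (x k))
    (hiter : ∀ k, x (k + 1) ∈ proxSet (fun z => ((α k : ℝ) : EReal) * f z)
      (x k - α k • h' (x k) + (α k * c k) • y (k + 1)))
    : Summable (fun k => ‖x (k + 1) - x k‖) ∧
      ∃ xs : EuclideanSpace ℝ (Fin n), Tendsto x atTop (𝓝 xs) ∧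
        (g xs ≠ 0 ∧ f xs ≠ ⊤) ∧
        ((Ffrac f g h xs).toReal) • g' xs - h' xs ∈ fsub f xs := by
  exact pgsa_global_convergence_general
    ⟨⟨hf_ne_bot, hfh, fun z hz => hg_pos z hz.2 hz.1, hA1⟩, hA4_grad, hh_grad, hh_lip⟩
    hf_lsc hg_cvx.locallyLipschitz.continuous hA2
    (locallyLipschitzOn_of_forall_norm_sub_lt hA3) (locallyLipschitzOn_of_forall_ball hA4_lip)
    hKL hαlo (by rwa [Real.coe_toNNReal L hL.le, ← lt_div_iff₀ hL])
    ⟨hx0, fun k => ⟨α k, hα k, y (k + 1), hy k, by rw [fracValue, ← hc k]; exact hiter k⟩⟩
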